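/- arXiv:1504.07290 — 2 statements merged into one kernel-verified Lean document; each statement's English description precedes it below -/
import Mathlib

section
/- There exists a splitting coloring s of the 14-element set P = {1,…,14} that simultaneously has no monochromatic K₄, no monochromatic K_{4,3}, and no monochromatic K_{5,2}. (One such coloring is obtained by restricting to 14 vertices the cyclic coloring of K₁₇ whose b₀ color class is given by the difference set {1,2,4,8,9,13,15,16} in ZMod 17.) -/
/-- The three colors: red `r` and the two blues `b0`, `b1`. -/
inductive Color where
  | r : Color
  | b0 : Color
  | b1 : Color
  deriving DecidableEq

/-!
Color the pair `{x, y}` of points of `ZMod 17` by the quadratic character of `x - y`. Affine maps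
preserve this coloring up to swapping the two colors, so two given points may be moved to `0` and
`1`. Their common neighbors are then `{2, 9, 16}` in the color of squares and `{6, 7, 11, 12}` in
the color of non-squares. Hence there is no monochromatic `K_{5,2}`. Since the differences within
`{2, 9, 16}` are the non-squares `±7` and `±14`, there is no monochromatic `K₄`; since no third
point is joined to all of `{6, 7, 11, 12}` by non-squares, there is no monochromatic `K_{4,3}`.
-/

open Finset

section Field

variable {F : Type*} [Field F]

/-- The affine coordinate on the line `F` in which `x` is the origin and `y` is the unit point; it
is used to move two points of a configuration to `0` and `1`. -/
def normalizedCoord (x y u : F) : F := (u - x) / (y - x)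

theorem normalizedCoord_left (x y : F) : normalizedCoord x y x = 0 := by
  rw [normalizedCoord, sub_self, zero_div]

theorem normalizedCoord_right {x y : F} (hxy : x ≠ y) : normalizedCoord x y y = 1 :=
  div_self (sub_ne_zero.2 hxy.symm)

theorem normalizedCoord_injective {x y : F} (hxy : x ≠ y) :
    Function.Injective (normalizedCoord x y) :=
  fun _ _ h => sub_left_injective ((div_left_inj' (sub_ne_zero.2 hxy.symm)).1 h)

end Field

section FiniteField

variable {F : Type*} [Field F] [Fintype F] [DecidableEq F]

theorem quadraticChar_div (a b : F) :
    quadraticChar F (a / b) = quadraticChar F a * quadraticChar F b := by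
  rcases eq_or_ne b 0 with rfl | hb
  · simp only [div_zero, quadraticChar_zero, mul_zero]
  · calc quadraticChar F (a / b)
        = quadraticChar F (a / b) * quadraticChar F b ^ 2 := by
          rw [quadraticChar_sq_one hb, mul_one]
      _ = quadraticChar F (a / b * b) * quadraticChar F b := by rw [map_mul]; ring
      _ = quadraticChar F a * quadraticChar F b := by rw [div_mul_cancel₀ a hb]

theorem quadraticChar_normalizedCoord_sub (x y u v : F) :
    quadraticChar F (normalizedCoord x y u - normalizedCoord x y v) =
      quadraticChar F (u - v) * quadraticChar F (y - x) := by
  rw [normalizedCoord, normalizedCoord, ← sub_div, sub_sub_sub_cancel_right, quadraticChar_div]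

/-- The common neighbors of the points of `S` in the color `c`, where a pair `{w, x}` of points of
`F` is colored by the value `±1` of the quadratic character at `w - x`. The two colors are encoded
as the units of `ℤ`. -/
def paleyCommonNeighbors (c : ℤˣ) (S : Finset F) : Finset F :=
  {w | ∀ x ∈ S, quadraticChar F (w - x) = c}

theorem mem_paleyCommonNeighbors {c : ℤˣ} {S : Finset F} {w : F} :
    w ∈ paleyCommonNeighbors c S ↔ ∀ x ∈ S, quadraticChar F (w - x) = c :=
  mem_filter_univ w

theorem paleyCommonNeighbors_anti (c : ℤˣ) {S T : Finset F} (hST : S ⊆ T) :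
    paleyCommonNeighbors c T ⊆ paleyCommonNeighbors c S := fun _ hw =>
  mem_paleyCommonNeighbors.2 fun x hx => mem_paleyCommonNeighbors.1 hw x (hST hx)

theorem normalizedCoord_mem_paleyCommonNeighbors {c d : ℤˣ} {S : Finset F} {x y w : F}
    (hd : quadraticChar F (y - x) = d) (hw : w ∈ paleyCommonNeighbors c S) :
    normalizedCoord x y w ∈ paleyCommonNeighbors (c * d) (S.image (normalizedCoord x y)) := by
  refine mem_paleyCommonNeighbors.2 (forall_mem_image.2 fun u hu => ?_)
  rw [quadraticChar_normalizedCoord_sub, mem_paleyCommonNeighbors.1 hw u hu, hd, Units.val_mul]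

theorem exists_card_paleyCommonNeighbors_le (c : ℤˣ) (S : Finset F) {x y : F} (hxy : x ≠ y) :
    ∃ d : ℤˣ, #(paleyCommonNeighbors c S) ≤
      #(paleyCommonNeighbors d (S.image (normalizedCoord x y))) := by
  obtain ⟨d, hd⟩ := (sub_ne_zero.2 hxy.symm).isUnit.map (quadraticChar F)
  exact ⟨c * d, card_le_card_of_injOn (normalizedCoord x y)
    (fun _ hw => normalizedCoord_mem_paleyCommonNeighbors hd.symm hw)
    (normalizedCoord_injective hxy).injOn⟩

/-- The Paley coloring of the pairs of points of `F`: squares `x - y` give `b₀`, non-squares give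
`b₁`. The diagonal carries the irrelevant value `b₁`. -/
def paleyColoring (x y : F) : Color :=
  if quadraticChar F (x - y) = 1 then Color.b0 else Color.b1

theorem paleyColoring_comm (hF : IsSquare (-1 : F)) (x y : F) :
    paleyColoring x y = paleyColoring y x := by
  have hneg : quadraticChar F (-1) = 1 :=
    (quadraticChar_one_iff_isSquare (neg_ne_zero.2 one_ne_zero)).2 hF
  have hsub : quadraticChar F (x - y) = quadraticChar F (y - x) := by
    rw [← neg_sub y x, neg_eq_neg_one_mul, map_mul, hneg, one_mul]
  rw [paleyColoring, paleyColoring, hsub]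

theorem paleyColoring_eq_b0_or_b1 (x y : F) :
    paleyColoring x y = Color.b0 ∨ paleyColoring x y = Color.b1 :=
  ite_eq_or_eq _ _ _

theorem paleyColoring_eq_b0_iff {x y : F} :
    paleyColoring x y = Color.b0 ↔ quadraticChar F (x - y) = 1 := by
  unfold paleyColoring
  split_ifs with h <;> simp only [h]

theorem exists_units_of_paleyColoring_eq (b : Color) :
    ∃ c : ℤˣ, ∀ x y : F, x ≠ y → paleyColoring x y = b → quadraticChar F (x - y) = c := by
  cases b with
  | r =>
    refine ⟨1, fun x y _ hr => ?_⟩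
    rcases paleyColoring_eq_b0_or_b1 x y with hb | hb <;> exact nomatch hr.symm.trans hb
  | b0 => exact ⟨1, fun x y _ hb₀ => paleyColoring_eq_b0_iff.1 hb₀⟩
  | b1 =>
    refine ⟨-1, fun x y hxy hb₁ => ?_⟩
    refine (quadraticChar_dichotomy (sub_ne_zero.2 hxy)).resolve_left fun hone => ?_
    exact nomatch (paleyColoring_eq_b0_iff.2 hone).symm.trans hb₁

theorem exists_card_le_card_paleyCommonNeighbors_map {V : Type*} (f : V ↪ F) {b : Color}
    {A B : Finset V} (hAB : Disjoint A B)
    (hmono : ∀ i ∈ A, ∀ j ∈ B, paleyColoring (f i) (f j) = b) :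
    ∃ c : ℤˣ, #A ≤ #(paleyCommonNeighbors c (B.map f)) := by
  obtain ⟨c, hc⟩ := exists_units_of_paleyColoring_eq (F := F) b
  refine ⟨c, card_le_card_of_injOn f (fun i hi => ?_) f.injective.injOn⟩
  refine mem_paleyCommonNeighbors.2 (forall_mem_map.2 fun j hj => ?_)
  exact hc _ _ (f.injective.ne (disjoint_iff_ne.1 hAB i hi j hj)) (hmono i hi j hj)

end FiniteField

section OrderSeventeen

instance fact_prime_seventeen : Fact (Nat.Prime 17) := ⟨by norm_num⟩

theorem paleyCommonNeighbors_one_zero_one :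
    paleyCommonNeighbors 1 ({0, 1} : Finset (ZMod 17)) = {2, 9, 16} := by
  decide +kernel

theorem paleyCommonNeighbors_neg_one_zero_one :
    paleyCommonNeighbors (-1) ({0, 1} : Finset (ZMod 17)) = {6, 7, 11, 12} := by
  decide +kernel

theorem card_paleyCommonNeighbors_zero_one_le_four (c : ℤˣ) :
    #(paleyCommonNeighbors c ({0, 1} : Finset (ZMod 17))) ≤ 4 := by
  rcases Int.units_eq_one_or c with rfl | rfl
  · rw [paleyCommonNeighbors_one_zero_one]; decide
  · rw [paleyCommonNeighbors_neg_one_zero_one]; decide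

theorem exists_quadraticChar_sub_ne_neg_one :
    ∀ z : ZMod 17, z ≠ 0 → z ≠ 1 →
      ∃ w ∈ ({6, 7, 11, 12} : Finset (ZMod 17)), quadraticChar (ZMod 17) (w - z) ≠ -1 := by
  decide +kernel

theorem card_paleyCommonNeighbors_triple_le_three (c : ℤˣ) {z : ZMod 17} (hz₀ : z ≠ 0)
    (hz₁ : z ≠ 1) : #(paleyCommonNeighbors c {0, 1, z}) ≤ 3 := by
  have hsub : paleyCommonNeighbors c {0, 1, z} ⊆ paleyCommonNeighbors c {0, 1} :=
    paleyCommonNeighbors_anti c (by grind)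
  rcases Int.units_eq_one_or c with rfl | rfl
  · rw [paleyCommonNeighbors_one_zero_one] at hsub
    exact (card_le_card hsub).trans (by decide)
  · rw [paleyCommonNeighbors_neg_one_zero_one] at hsub
    obtain ⟨w, hw, hwz⟩ := exists_quadraticChar_sub_ne_neg_one z hz₀ hz₁
    have hw' : w ∉ paleyCommonNeighbors (-1) {0, 1, z} := fun h =>
      hwz (mem_paleyCommonNeighbors.1 h z (by simp))
    exact Nat.le_of_lt_succ (card_lt_card ⟨hsub, fun h => hw' (h hw)⟩)

theorem card_paleyCommonNeighbors_le_four (c : ℤˣ) {S : Finset (ZMod 17)} (hS : 1 < #S) :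
    #(paleyCommonNeighbors c S) ≤ 4 := by
  obtain ⟨x, hx, y, hy, hxy⟩ := one_lt_card.1 hS
  obtain ⟨d, hd⟩ := exists_card_paleyCommonNeighbors_le c S hxy
  have hsub : {0, 1} ⊆ S.image (normalizedCoord x y) := by
    rw [← normalizedCoord_left x y, ← normalizedCoord_right hxy]
    grind
  calc #(paleyCommonNeighbors c S)
      ≤ #(paleyCommonNeighbors d (S.image (normalizedCoord x y))) := hd
    _ ≤ #(paleyCommonNeighbors d {0, 1}) := card_le_card (paleyCommonNeighbors_anti d hsub)
    _ ≤ 4 := card_paleyCommonNeighbors_zero_one_le_four d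

theorem card_paleyCommonNeighbors_le_three (c : ℤˣ) {S : Finset (ZMod 17)} (hS : 2 < #S) :
    #(paleyCommonNeighbors c S) ≤ 3 := by
  obtain ⟨x, hx, y, hy, z, hz, hxy, hxz, hyz⟩ := two_lt_card.1 hS
  obtain ⟨d, hd⟩ := exists_card_paleyCommonNeighbors_le c S hxy
  have hleft := normalizedCoord_left x y
  have hright := normalizedCoord_right hxy
  have hinj := normalizedCoord_injective hxy
  have hz₀ : normalizedCoord x y z ≠ 0 := hleft ▸ hinj.ne hxz.symm
  have hz₁ : normalizedCoord x y z ≠ 1 := hright ▸ hinj.ne hyz.symm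
  have hsub : {0, 1, normalizedCoord x y z} ⊆ S.image (normalizedCoord x y) := by grind
  calc #(paleyCommonNeighbors c S)
      ≤ #(paleyCommonNeighbors d (S.image (normalizedCoord x y))) := hd
    _ ≤ #(paleyCommonNeighbors d {0, 1, normalizedCoord x y z}) :=
      card_le_card (paleyCommonNeighbors_anti d hsub)
    _ ≤ 3 := card_paleyCommonNeighbors_triple_le_three d hz₀ hz₁

theorem quadraticChar_sub_ne_one_of_mem :
    ∀ u ∈ ({2, 9, 16} : Finset (ZMod 17)), ∀ v ∈ ({2, 9, 16} : Finset (ZMod 17)),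
      quadraticChar (ZMod 17) (u - v) ≠ 1 := by
  decide +kernel

theorem card_le_three_of_pairwise_quadraticChar_sub_eq {c : ℤˣ} {W : Finset (ZMod 17)}
    (hW : (W : Set (ZMod 17)).Pairwise fun x y => quadraticChar (ZMod 17) (x - y) = c) :
    #W ≤ 3 := by
  by_contra! hcard
  obtain ⟨x, hx, y, hy, z, hz, w, hw, hxy, hxz, hxw, hyz, hyw, hzw⟩ := three_lt_card.1 hcard
  have hyx : quadraticChar (ZMod 17) (y - x) = c := hW hy hx hxy.symm
  -- The pair `{0, 1}` has color `1`, so the normalization turns the color `c` into `1`.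
  have hnormalized {u : ZMod 17} (hu : u ∈ W) (hux : u ≠ x) (huy : u ≠ y) :
      normalizedCoord x y u ∈ ({2, 9, 16} : Finset (ZMod 17)) := by
    have hmem : u ∈ paleyCommonNeighbors c {x, y} := by
      simpa [mem_paleyCommonNeighbors] using ⟨hW hu hx hux, hW hu hy huy⟩
    simpa only [image_insert, image_singleton, normalizedCoord_left, normalizedCoord_right hxy,
      Int.units_mul_self, paleyCommonNeighbors_one_zero_one] using
      normalizedCoord_mem_paleyCommonNeighbors hyx hmem
  refine quadraticChar_sub_ne_one_of_mem _ (hnormalized hz hxz.symm hyz.symm)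
    _ (hnormalized hw hxw.symm hyw.symm) ?_
  rw [quadraticChar_normalizedCoord_sub, hW hz hw hzw, hyx, ← Units.val_mul, Int.units_mul_self,
    Units.val_one]

theorem isSquare_neg_one_zmod_seventeen : IsSquare (-1 : ZMod 17) := ⟨4, by decide⟩

theorem card_le_three_of_paleyColoring_eq {V : Type*} (f : V ↪ ZMod 17) {b : Color}
    {W : Finset V} (hmono : ∀ i ∈ W, ∀ j ∈ W, i ≠ j → paleyColoring (f i) (f j) = b) :
    #W ≤ 3 := by
  obtain ⟨c, hc⟩ := exists_units_of_paleyColoring_eq (F := ZMod 17) b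
  rw [← card_map f]
  refine card_le_three_of_pairwise_quadraticChar_sub_eq (c := c) ?_
  rw [coe_map, f.injective.injOn.pairwise_image]
  exact fun i hi j hj hij => hc _ _ (f.injective.ne hij) (hmono i hi j hj hij)

end OrderSeventeen

theorem exists_good_splitting_coloring_general {V : Type*} [Fintype V]
    (hV : Fintype.card V ≤ 17) :
    ∃ s : V → V → Color,
      (∀ i j : V, i ≠ j → s i j = s j i) ∧
      (∀ i j : V, i ≠ j → s i j = Color.b0 ∨ s i j = Color.b1) ∧
      (¬ ∃ (b : Color) (W : Finset V), W.card = 4 ∧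
        ∀ i ∈ W, ∀ j ∈ W, i ≠ j → s i j = b) ∧
      (¬ ∃ (b : Color) (A B : Finset V), Disjoint A B ∧ A.card = 4 ∧ B.card = 3 ∧
        ∀ i ∈ A, ∀ j ∈ B, s i j = b) ∧
      (¬ ∃ (b : Color) (A B : Finset V), Disjoint A B ∧ A.card = 5 ∧ B.card = 2 ∧
        ∀ i ∈ A, ∀ j ∈ B, s i j = b) := by
  obtain ⟨f⟩ : Nonempty (V ↪ ZMod 17) :=
    Function.Embedding.nonempty_of_card_le (hV.trans_eq (ZMod.card 17).symm)
  refine ⟨fun i j => paleyColoring (f i) (f j),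
    fun i j _ => paleyColoring_comm isSquare_neg_one_zmod_seventeen _ _,
    fun i j _ => paleyColoring_eq_b0_or_b1 _ _, ?_, ?_, ?_⟩
  · rintro ⟨b, W, hW, hmono⟩
    have := card_le_three_of_paleyColoring_eq f hmono
    lia
  · rintro ⟨b, A, B, hAB, hA, hB, hmono⟩
    obtain ⟨c, hc⟩ := exists_card_le_card_paleyCommonNeighbors_map f hAB hmono
    have := card_paleyCommonNeighbors_le_three c (S := B.map f) (by rw [card_map, hB]; decide)
    lia
  · rintro ⟨b, A, B, hAB, hA, hB, hmono⟩
    obtain ⟨c, hc⟩ := exists_card_le_card_paleyCommonNeighbors_map f hAB hmono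
    have := card_paleyCommonNeighbors_le_four c (S := B.map f) (by rw [card_map, hB]; decide)
    lia

/-- There exists a splitting coloring of the 14-element point set (a symmetric 2-coloring of
the pairs of distinct points with colors `b₀`, `b₁`) that has no monochromatic `K₄`, no
monochromatic `K_{4,3}`, and no monochromatic `K_{5,2}`. -/
theorem exists_good_splitting_coloring :
    ∃ s : Fin 14 → Fin 14 → Color,
      (∀ i j : Fin 14, i ≠ j → s i j = s j i) ∧
      (∀ i j : Fin 14, i ≠ j → s i j = Color.b0 ∨ s i j = Color.b1) ∧
      -- no monochromatic K₄
      (¬ ∃ (b : Color) (W : Finset (Fin 14)), W.card = 4 ∧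
        ∀ i ∈ W, ∀ j ∈ W, i ≠ j → s i j = b) ∧
      -- no monochromatic K_{4,3}
      (¬ ∃ (b : Color) (A B : Finset (Fin 14)), Disjoint A B ∧ A.card = 4 ∧ B.card = 3 ∧
        ∀ i ∈ A, ∀ j ∈ B, s i j = b) ∧
      -- no monochromatic K_{5,2}
      (¬ ∃ (b : Color) (A B : Finset (Fin 14)), Disjoint A B ∧ A.card = 5 ∧ B.card = 2 ∧
        ∀ i ∈ A, ∀ j ∈ B, s i j = b) := by
  exact exists_good_splitting_coloring_general (by simp)
end

section
/- (4-edge case) Let s be a splitting coloring of P = {1,…,14} with no monochromatic K₄, no monochromatic K_{4,3}, and no monochromatic K_{5,2}, and let c be the induced coloring on 7-element subsets of P. Then for all 7-element subsets X, Y of P with |X ∩ Y| = 4 (so c(XY) = r) and every triple (r, j, k) ∈ M₂, there exists a 7-element subset Z of P, distinct from X and Y, with c(XZ) = j and c(YZ) = k. -/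
/-- `M₂ = L³ \ {b₀,b₁}³`: the triples of colors that are not all blue. -/
def M2 (t : Color × Color × Color) : Prop :=
  ¬ ((t.1 = Color.b0 ∨ t.1 = Color.b1) ∧ (t.2.1 = Color.b0 ∨ t.2.1 = Color.b1) ∧
     (t.2.2 = Color.b0 ∨ t.2.2 = Color.b1))

/-!
Let `X` and `Y` have `n = m + 3` points, `m` of them common. On a ground set of `2n` or more points,
every `U ⊆ X ∪ Y` with `3 ≤ |U| ≤ n` extends to an `n`-set `Z` by points outside `X ∪ Y`, so it
suffices to choose `U` such that its traces `X ∩ U` and `Y ∩ U` have the wanted colors `j` and `k`.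

If one of the wanted colors is red, one of the three-point sets `X \ Y`, `Y \ X` is a trace of that
color, and the other trace can be chosen freely in the other set. Suppose both colors are blue. If
`X \ Y` contains a pair colored `j` and `Y \ X` a pair colored `k`, take for `U` the union of these
pairs. Otherwise, by symmetry, the triangle `X \ Y` is monochromatic in the blue other than `j`;
there is no monochromatic `K₄`, so every `i ∈ X ∩ Y` is joined in color `j` to some `x ∈ X \ Y`. As
`X ∩ Y` and `Y \ X` do not span a monochromatic `K_{m,3}`, some such `i` is joined in color `k` to
some `y ∈ Y \ X`, and `U = {i, x, y}` has the right traces.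
-/

/-- The blue colors `b₀` and `b₁`. -/
def Color.IsBlue (t : Color) : Prop := t = Color.b0 ∨ t = Color.b1

theorem Color.eq_r_or_isBlue (t : Color) : t = Color.r ∨ t.IsBlue := by
  cases t <;> simp [Color.IsBlue]

theorem Color.IsBlue.exists_forall_eq_of_ne {j : Color} (hj : j.IsBlue) :
    ∃ b : Color, ∀ t : Color, t.IsBlue → t ≠ j → t = b := by
  rcases hj with rfl | rfl
  · exact ⟨Color.b1, fun _ ht hne => ht.resolve_left hne⟩
  · exact ⟨Color.b0, fun _ ht hne => ht.resolve_right hne⟩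

section Colorings

variable {α κ : Type*}

/-- A splitting coloring: a symmetric coloring of the pairs of distinct points by the two blues.
Values on the diagonal are junk. -/
structure IsSplitting (s : α → α → Color) : Prop where
  symm : ∀ i j : α, i ≠ j → s i j = s j i
  isBlue : ∀ i j : α, i ≠ j → (s i j).IsBlue

/-- `s` has no monochromatic `K_n`. -/
def MonoCliqueFree (s : α → α → κ) (n : ℕ) : Prop :=
  ¬ ∃ (b : κ) (W : Finset α), W.card = n ∧ ∀ i ∈ W, ∀ j ∈ W, i ≠ j → s i j = b

/-- `s` has no monochromatic `K_{m,n}`. -/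
def MonoBicliqueFree (s : α → α → κ) (m n : ℕ) : Prop :=
  ¬ ∃ (b : κ) (A B : Finset α), Disjoint A B ∧ A.card = m ∧ B.card = n ∧
    ∀ i ∈ A, ∀ j ∈ B, s i j = b

theorem MonoCliqueFree.exists_ne {s : α → α → κ} {T : Finset α} {b : κ} {i : α}
    (hs : MonoCliqueFree s (T.card + 1)) (hsymm : ∀ p q : α, p ≠ q → s p q = s q p)
    (hT : ∀ p ∈ T, ∀ q ∈ T, p ≠ q → s p q = b) (hi : i ∉ T) : ∃ t ∈ T, s i t ≠ b := by
  classical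
  by_contra! hmono
  refine hs ⟨b, insert i T, Finset.card_insert_of_notMem hi, fun p hp q hq hpq => ?_⟩
  rw [Finset.mem_insert] at hp hq
  rcases hp with rfl | hp <;> rcases hq with rfl | hq
  · exact absurd rfl hpq
  · exact hmono q hq
  · exact (hsymm p q hpq).trans (hmono p hp)
  · exact hT p hp q hq hpq

theorem IsSplitting.exists_pair_eq_or_forall_exists_eq {s : α → α → Color} (hs : IsSplitting s)
    {T : Finset α} (hT : MonoCliqueFree s (T.card + 1)) {j : Color} (hj : j.IsBlue) :
    (∃ p ∈ T, ∃ q ∈ T, p ≠ q ∧ s p q = j) ∨ ∀ i ∉ T, ∃ t ∈ T, s i t = j := by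
  obtain ⟨b, hb⟩ := hj.exists_forall_eq_of_ne
  refine or_iff_not_imp_left.mpr fun hno i hi => ?_
  push Not at hno
  have hmono : ∀ p ∈ T, ∀ q ∈ T, p ≠ q → s p q = b := fun p hp q hq hpq =>
    hb _ (hs.isBlue p q hpq) (hno p hp q hq hpq)
  obtain ⟨t, ht, hne⟩ := hT.exists_ne hs.symm hmono hi
  exact ⟨t, ht, by_contra fun h => hne (hb _ (hs.isBlue i t (ne_of_mem_of_not_mem ht hi).symm) h)⟩

theorem IsSplitting.exists_eq_of_monoBicliqueFree {s : α → α → Color} (hs : IsSplitting s)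
    {A B : Finset α} (hAB : Disjoint A B) (hfree : MonoBicliqueFree s A.card B.card)
    {j : Color} (hj : j.IsBlue) : ∃ i ∈ A, ∃ t ∈ B, s i t = j := by
  obtain ⟨b, hb⟩ := hj.exists_forall_eq_of_ne
  by_contra! hno
  exact hfree ⟨b, A, B, hAB, rfl, rfl, fun i hi t ht =>
    hb _ (hs.isBlue i t (Finset.disjoint_iff_ne.mp hAB i hi t ht)) (hno i hi t ht)⟩

end Colorings

section InducedColoring

variable {α : Type*} {s : α → α → Color} {c : Finset α → Finset α → Color} {n : ℕ}
  {X Y : Finset α} {j k : Color}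

/-- The need `(c X Y, j, k)` of the edge `XY` is met among the `n`-sets: some `n`-set `Z` other
than `X` and `Y` has `c X Z = j` and `c Y Z = k`. -/
def IsNeedMet (c : Finset α → Finset α → Color) (n : ℕ) (X Y : Finset α) (j k : Color) : Prop :=
  ∃ Z : Finset α, Z.card = n ∧ Z ≠ X ∧ Z ≠ Y ∧ c X Z = j ∧ c Y Z = k

theorem IsNeedMet.symm (h : IsNeedMet c n X Y j k) : IsNeedMet c n Y X k j := by
  obtain ⟨Z, hZ, hZX, hZY, hj, hk⟩ := h
  exact ⟨Z, hZ, hZY, hZX, hk, hj⟩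

variable [DecidableEq α]

/-- `TraceColor s T t` says that the rule inducing a coloring from `s` gives the color `t` to two
sets with intersection `T`. It is a relation rather than a function since a pair `{i, j}` comes
without a preferred order of its points. -/
inductive TraceColor (s : α → α → Color) : Finset α → Color → Prop
  | empty : TraceColor s ∅ Color.b0
  | singleton (i : α) : TraceColor s {i} Color.b1
  | pair {i j : α} (hij : i ≠ j) : TraceColor s {i, j} (s i j)
  | red {T : Finset α} (hT : 3 ≤ T.card) : TraceColor s T Color.r

/-- `c` restricts to the coloring of the pairs of distinct `n`-sets that is induced by `s`. -/
def IsInducedColoring (n : ℕ) (s : α → α → Color) (c : Finset α → Finset α → Color) : Prop :=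
  ∀ X Y : Finset α, X.card = n → Y.card = n → X ≠ Y →
    ∀ t : Color, TraceColor s (X ∩ Y) t → c X Y = t

theorem IsInducedColoring.of_card
    (hc0 : ∀ X Y : Finset α, X.card = n → Y.card = n → (X ∩ Y).card = 0 → c X Y = Color.b0)
    (hc1 : ∀ X Y : Finset α, X.card = n → Y.card = n → (X ∩ Y).card = 1 → c X Y = Color.b1)
    (hc2 : ∀ X Y : Finset α, X.card = n → Y.card = n → ∀ i j : α, i ≠ j →
      X ∩ Y = {i, j} → c X Y = s i j)
    (hcr : ∀ X Y : Finset α, X.card = n → Y.card = n → X ≠ Y →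
      3 ≤ (X ∩ Y).card → c X Y = Color.r) : IsInducedColoring n s c := by
  intro X Y hX hY hne t ht
  generalize hT : X ∩ Y = T at ht
  cases ht with
  | empty => exact hc0 X Y hX hY (by rw [hT, Finset.card_empty])
  | singleton i => exact hc1 X Y hX hY (by rw [hT, Finset.card_singleton])
  | pair hij => exact hc2 X Y hX hY _ _ hij hT
  | red h3 => exact hcr X Y hX hY hne (by rwa [hT])

theorem exists_subset_traceColor (s : α → α → Color) {T : Finset α} (hT : 3 ≤ T.card)
    (t : Color) : ∃ C ⊆ T, TraceColor s C t := by
  obtain ⟨y, hy⟩ : T.Nonempty := Finset.card_pos.mp (by lia)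
  cases t
  case r => exact ⟨T, Finset.Subset.rfl, .red hT⟩
  case b0 => exact ⟨∅, Finset.empty_subset T, .empty⟩
  case b1 => exact ⟨{y}, Finset.singleton_subset_iff.mpr hy, .singleton y⟩

theorem card_sdiff_eq_of_card_inter_add {d : ℕ} (hX : X.card = n)
    (hXY : (X ∩ Y).card + d = n) : (X \ Y).card = d := by
  have := Finset.card_sdiff_add_card_inter X Y
  lia

theorem exists_card_eq_inter_eq [Fintype α] {U W : Finset α} (hUW : U ⊆ W) (hUn : U.card ≤ n)
    (hn : n + W.card ≤ U.card + Fintype.card α) : ∃ Z : Finset α, Z.card = n ∧ W ∩ Z = U := by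
  have hdisj : Disjoint U Wᶜ := disjoint_compl_right.mono_left hUW
  have hroom : n ≤ (U ∪ Wᶜ).card := by
    rw [Finset.card_union_of_disjoint hdisj, Finset.card_compl]
    lia
  obtain ⟨Z, hUZ, hZ, hcard⟩ :=
    Finset.exists_subsuperset_card_eq Finset.subset_union_left hUn hroom
  refine ⟨Z, hcard, Finset.Subset.antisymm (fun z hz => ?_) (Finset.subset_inter hUW hUZ)⟩
  obtain ⟨hzW, hzZ⟩ := Finset.mem_inter.mp hz
  exact (Finset.mem_union.mp (hZ hzZ)).resolve_right fun h => Finset.mem_compl.mp h hzW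

variable [Fintype α]

theorem IsInducedColoring.isNeedMet_of_traceColor (hc : IsInducedColoring n s c) (hX : X.card = n)
    (hY : Y.card = n) {U : Finset α} (hU : U ⊆ X ∪ Y) (hUn : U.card ≤ n)
    (hn : n + (X ∪ Y).card ≤ U.card + Fintype.card α)
    (hXU : (X ∩ U).card < n) (hYU : (Y ∩ U).card < n)
    (hj : TraceColor s (X ∩ U) j) (hk : TraceColor s (Y ∩ U) k) : IsNeedMet c n X Y j k := by
  obtain ⟨Z, hZ, hZU⟩ := exists_card_eq_inter_eq hU hUn hn
  have hXZ : X ∩ Z = X ∩ U := by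
    rw [← hZU, ← Finset.inter_assoc, Finset.inter_eq_left.mpr Finset.subset_union_left]
  have hYZ : Y ∩ Z = Y ∩ U := by
    rw [← hZU, ← Finset.inter_assoc, Finset.inter_eq_left.mpr Finset.subset_union_right]
  have hne_X : X ≠ Z := by
    rintro rfl
    rw [← hXZ, Finset.inter_self] at hXU
    exact hXU.ne hX
  have hne_Y : Y ≠ Z := by
    rintro rfl
    rw [← hYZ, Finset.inter_self] at hYU
    exact hYU.ne hY
  exact ⟨Z, hZ, hne_X.symm, hne_Y.symm, hc X Z hX hZ hne_X j (hXZ ▸ hj),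
    hc Y Z hY hZ hne_Y k (hYZ ▸ hk)⟩

variable (hα : 2 * n ≤ Fintype.card α) (hc : IsInducedColoring n s c) (hX : X.card = n)
  (hY : Y.card = n) (hXY : (X ∩ Y).card + 3 = n)
include hα hc hX hY hXY

theorem IsInducedColoring.isNeedMet_of_subset_sdiff (hn : 6 ≤ n) {B C : Finset α}
    (hB : B ⊆ X \ Y) (hC : C ⊆ Y \ X) (hBC : 3 ≤ B.card + C.card)
    (hj : TraceColor s B j) (hk : TraceColor s C k) : IsNeedMet c n X Y j k := by
  have hunion := Finset.card_union_add_card_inter X Y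
  have hYX : (Y ∩ X).card + 3 = n := Finset.inter_comm X Y ▸ hXY
  have hB3 : B.card ≤ 3 :=
    (Finset.card_le_card hB).trans_eq (card_sdiff_eq_of_card_inter_add hX hXY)
  have hC3 : C.card ≤ 3 :=
    (Finset.card_le_card hC).trans_eq (card_sdiff_eq_of_card_inter_add hY hYX)
  obtain ⟨hBX, hBY⟩ := Finset.subset_sdiff.mp hB
  obtain ⟨hCY, hCX⟩ := Finset.subset_sdiff.mp hC
  have hXU : X ∩ (B ∪ C) = B := by
    rw [Finset.inter_union_distrib_left, Finset.inter_eq_right.mpr hBX,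
      Finset.disjoint_iff_inter_eq_empty.mp hCX.symm, Finset.union_empty]
  have hYU : Y ∩ (B ∪ C) = C := by
    rw [Finset.inter_union_distrib_left, Finset.inter_eq_right.mpr hCY,
      Finset.disjoint_iff_inter_eq_empty.mp hBY.symm, Finset.empty_union]
  have hcard : (B ∪ C).card = B.card + C.card :=
    Finset.card_union_of_disjoint (hBY.mono_right hCY)
  refine hc.isNeedMet_of_traceColor hX hY (Finset.union_subset_union hBX hCY) ?_ ?_ ?_ ?_
    (hXU.symm ▸ hj) (hYU.symm ▸ hk) <;> simp only [hXU, hYU, hcard] <;> lia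

theorem IsInducedColoring.isNeedMet_of_mem_inter {i x y : α} (hi : i ∈ X ∩ Y) (hx : x ∈ X \ Y)
    (hy : y ∈ Y \ X) : IsNeedMet c n X Y (s i x) (s i y) := by
  have hunion := Finset.card_union_add_card_inter X Y
  have hpos : 0 < (X ∩ Y).card := Finset.card_pos.mpr ⟨i, hi⟩
  obtain ⟨hiX, hiY⟩ := Finset.mem_inter.mp hi
  obtain ⟨hxX, hxY⟩ := Finset.mem_sdiff.mp hx
  obtain ⟨hyY, hyX⟩ := Finset.mem_sdiff.mp hy
  have hix : i ≠ x := ne_of_mem_of_not_mem hiY hxY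
  have hiy : i ≠ y := ne_of_mem_of_not_mem hiX hyX
  have hxy : x ≠ y := ne_of_mem_of_not_mem hxX hyX
  have hU : ({i, x, y} : Finset α) ⊆ X ∪ Y := by
    simp [Finset.insert_subset_iff, hiX, hxX, hyY]
  have hXU : X ∩ {i, x, y} = {i, x} := by
    simp [Finset.inter_insert_of_mem, Finset.inter_singleton_of_notMem, hiX, hxX, hyX]
  have hYU : Y ∩ {i, x, y} = {i, y} := by
    simp [Finset.inter_insert_of_mem, Finset.inter_insert_of_notMem, hiY, hxY, hyY]
  have hcard : ({i, x, y} : Finset α).card = 3 := Finset.card_eq_three.mpr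
    ⟨i, x, y, hix, hiy, hxy, rfl⟩
  refine hc.isNeedMet_of_traceColor hX hY hU ?_ ?_ ?_ ?_
    (hXU.symm ▸ .pair hix) (hYU.symm ▸ .pair hiy) <;>
    simp only [hXU, hYU, hcard, Finset.card_pair hix, Finset.card_pair hiy] <;> lia

theorem IsInducedColoring.isNeedMet_red_left (hn : 6 ≤ n) (k : Color) :
    IsNeedMet c n X Y Color.r k := by
  have hYX : (Y ∩ X).card + 3 = n := Finset.inter_comm X Y ▸ hXY
  have hXdiff : 3 ≤ (X \ Y).card := (card_sdiff_eq_of_card_inter_add hX hXY).ge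
  have hYdiff : 3 ≤ (Y \ X).card := (card_sdiff_eq_of_card_inter_add hY hYX).ge
  obtain ⟨C, hC, hk⟩ := exists_subset_traceColor s hYdiff k
  exact hc.isNeedMet_of_subset_sdiff hα hX hY hXY hn Finset.Subset.rfl hC
    (hXdiff.trans (Nat.le_add_right _ _)) (.red hXdiff) hk

theorem IsInducedColoring.isNeedMet_of_forall_exists_eq (hs : IsSplitting s)
    (hfree : MonoBicliqueFree s (X ∩ Y).card 3) (hk : k.IsBlue)
    (hj : ∀ i ∈ X ∩ Y, ∃ x ∈ X \ Y, s i x = j) : IsNeedMet c n X Y j k := by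
  have hYX : (Y ∩ X).card + 3 = n := Finset.inter_comm X Y ▸ hXY
  have hYdiff : (Y \ X).card = 3 := card_sdiff_eq_of_card_inter_add hY hYX
  have hdisj : Disjoint (X ∩ Y) (Y \ X) :=
    Finset.disjoint_sdiff.mono_left Finset.inter_subset_left
  obtain ⟨i, hi, y, hy, rfl⟩ := hs.exists_eq_of_monoBicliqueFree hdisj (hYdiff.symm ▸ hfree) hk
  obtain ⟨x, hx, rfl⟩ := hj i hi
  exact hc.isNeedMet_of_mem_inter hα hX hY hXY hi hx hy

theorem IsInducedColoring.isNeedMet_of_isBlue (hn : 6 ≤ n) (hs : IsSplitting s)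
    (hK4 : MonoCliqueFree s 4) (hfree : MonoBicliqueFree s (X ∩ Y).card 3)
    (hj : j.IsBlue) (hk : k.IsBlue) : IsNeedMet c n X Y j k := by
  have hYX : (Y ∩ X).card + 3 = n := Finset.inter_comm X Y ▸ hXY
  have hXdiff : (X \ Y).card = 3 := card_sdiff_eq_of_card_inter_add hX hXY
  have hYdiff : (Y \ X).card = 3 := card_sdiff_eq_of_card_inter_add hY hYX
  have hKX : MonoCliqueFree s ((X \ Y).card + 1) := by rwa [hXdiff]
  have hKY : MonoCliqueFree s ((Y \ X).card + 1) := by rwa [hYdiff]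
  rcases hs.exists_pair_eq_or_forall_exists_eq hKX hj with
    ⟨p, hp, q, hq, hpq, rfl⟩ | hXj
  · rcases hs.exists_pair_eq_or_forall_exists_eq hKY hk with
      ⟨u, hu, v, hv, huv, rfl⟩ | hYk
    · refine hc.isNeedMet_of_subset_sdiff hα hX hY hXY hn
        (Finset.insert_subset hp (Finset.singleton_subset_iff.mpr hq))
        (Finset.insert_subset hu (Finset.singleton_subset_iff.mpr hv)) ?_ (.pair hpq) (.pair huv)
      rw [Finset.card_pair hpq, Finset.card_pair huv]
      norm_num
    · refine (hc.isNeedMet_of_forall_exists_eq hα hY hX hYX hs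
        (Finset.inter_comm X Y ▸ hfree) hj fun i hi => hYk i fun h => ?_).symm
      exact (Finset.mem_sdiff.mp h).2 (Finset.mem_inter.mp hi).2
  · refine hc.isNeedMet_of_forall_exists_eq hα hX hY hXY hs hfree hk fun i hi => hXj i fun h => ?_
    exact (Finset.mem_sdiff.mp h).2 (Finset.mem_inter.mp hi).2

end InducedColoring

theorem four_edge_needs_met_general {α : Type*} [Fintype α] [DecidableEq α] {m : ℕ} (hm : 3 ≤ m)
    (hα : 2 * (m + 3) ≤ Fintype.card α) {s : α → α → Color} (hs : IsSplitting s)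
    (hK4 : MonoCliqueFree s 4) (hK : MonoBicliqueFree s m 3)
    {c : Finset α → Finset α → Color} (hc : IsInducedColoring (m + 3) s c) {X Y : Finset α}
    (hX : X.card = m + 3) (hY : Y.card = m + 3) (hXY : (X ∩ Y).card = m) (j k : Color) :
    IsNeedMet c (m + 3) X Y j k := by
  have hn : 6 ≤ m + 3 := by lia
  have hXY' : (X ∩ Y).card + 3 = m + 3 := by rw [hXY]
  have hYX' : (Y ∩ X).card + 3 = m + 3 := by rw [Finset.inter_comm, hXY]
  rcases j.eq_r_or_isBlue with rfl | hj
  · exact hc.isNeedMet_red_left hα hX hY hXY' hn k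
  rcases k.eq_r_or_isBlue with rfl | hk
  · exact (hc.isNeedMet_red_left hα hY hX hYX' hn j).symm
  exact hc.isNeedMet_of_isBlue hα hX hY hXY' hn hs hK4 (hXY.symm ▸ hK) hj hk

/-- (4-edge case) For 7-element subsets `X`, `Y` with `|X ∩ Y| = 4` (so `c(XY) = r`),
every need `(r, j, k) ∈ M₂` of the edge `XY` has a witness: a 7-element subset `Z`,
distinct from `X` and `Y`, with `c(XZ) = j` and `c(YZ) = k`. -/
theorem four_edge_needs_met
    -- `s` is a splitting coloring: symmetric with values in {b₀, b₁}
    (s : Fin 14 → Fin 14 → Color)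
    (hssym : ∀ i j : Fin 14, i ≠ j → s i j = s j i)
    (hsblue : ∀ i j : Fin 14, i ≠ j → s i j = Color.b0 ∨ s i j = Color.b1)
    -- `s` has no monochromatic K₄
    (hK4 : ¬ ∃ (b : Color) (W : Finset (Fin 14)), W.card = 4 ∧
      ∀ i ∈ W, ∀ j ∈ W, i ≠ j → s i j = b)
    -- `s` has no monochromatic K_{4,3}
    (hK43 : ¬ ∃ (b : Color) (A B : Finset (Fin 14)), Disjoint A B ∧ A.card = 4 ∧ B.card = 3 ∧
      ∀ i ∈ A, ∀ j ∈ B, s i j = b)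
    -- `s` has no monochromatic K_{5,2}
    (hK52 : ¬ ∃ (b : Color) (A B : Finset (Fin 14)), Disjoint A B ∧ A.card = 5 ∧ B.card = 2 ∧
      ∀ i ∈ A, ∀ j ∈ B, s i j = b)
    -- `c` is the coloring on 7-element subsets induced by `s`
    (c : Finset (Fin 14) → Finset (Fin 14) → Color)
    (hc0 : ∀ X Y : Finset (Fin 14), X.card = 7 → Y.card = 7 →
      (X ∩ Y).card = 0 → c X Y = Color.b0)
    (hc1 : ∀ X Y : Finset (Fin 14), X.card = 7 → Y.card = 7 →
      (X ∩ Y).card = 1 → c X Y = Color.b1)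
    (hc2 : ∀ X Y : Finset (Fin 14), X.card = 7 → Y.card = 7 → ∀ i j : Fin 14, i ≠ j →
      X ∩ Y = {i, j} → c X Y = s i j)
    (hcr : ∀ X Y : Finset (Fin 14), X.card = 7 → Y.card = 7 → X ≠ Y →
      3 ≤ (X ∩ Y).card → c X Y = Color.r)
    :
    ∀ X Y : Finset (Fin 14), X.card = 7 → Y.card = 7 → (X ∩ Y).card = 4 →
      ∀ j k : Color, M2 (Color.r, j, k) →
      ∃ Z : Finset (Fin 14), Z.card = 7 ∧ Z ≠ X ∧ Z ≠ Y ∧ c X Z = j ∧ c Y Z = k := by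
  intro X Y hX hY hXY j k _
  have hc : IsInducedColoring 7 s c := .of_card hc0 hc1 hc2 hcr
  exact four_edge_needs_met_general (m := 4) (by norm_num) (by simp) ⟨hssym, hsblue⟩ hK4 hK43 hc
    hX hY hXY j k
end
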